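/- Let P_1, P_2, P_3 be three non-zero monomial prime ideals of S = K[x_1,...,x_n], none contained in another, and I = P_1 ∩ P_2 ∩ P_3. Then sdepth_S(I) ≥ depth_S(I), i.e., Stanley's Conjecture holds for intersections of three monomial prime ideals. -/

import Mathlib

open MvPolynomial

/-- The depth of a module `M` with respect to an ideal `I`: the supremum of
lengths of `M`-regular sequences with entries in `I`. -/
noncomputable def moduleDepth (R : Type*) [CommRing R] (I : Ideal R)
    (M : Type*) [AddCommGroup M] [Module R M] : ℕ :=
  sSup {k | ∃ rs : List R, rs.length = k ∧ (∀ r ∈ rs, r ∈ I) ∧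
    RingTheory.Sequence.IsRegular M rs}

/-- The Stanley space `u·K[Z]`: the `K`-span of all monomials `u·v` with
`v` a monomial in the variables of `Z`. -/
noncomputable def stanleySpace {n : ℕ} (K : Type*) [Field K] (d : Fin n →₀ ℕ)
    (Z : Finset (Fin n)) : Submodule K (MvPolynomial (Fin n) K) :=
  Submodule.span K {f | ∃ e : Fin n →₀ ℕ, (∀ i, e i ≠ 0 → i ∈ Z) ∧
    f = monomial (d + e) (1 : K)}

/-- A Stanley decomposition of a monomial ideal `I`: a finite family of Stanley
spaces `uᵢ·K[Zᵢ]`, with each `uᵢ ∈ I`, which are independent and whose (direct)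
sum is `I` as a `K`-vector space. -/
structure StanleyDecomp {n : ℕ} (K : Type*) [Field K]
    (I : Ideal (MvPolynomial (Fin n) K)) where
  m : ℕ
  u : Fin m → (Fin n →₀ ℕ)
  Z : Fin m → Finset (Fin n)
  mem : ∀ i, monomial (u i) (1 : K) ∈ I
  indep : iSupIndep fun i => stanleySpace K (u i) (Z i)
  total : (⨆ i, stanleySpace K (u i) (Z i)) = Submodule.restrictScalars K I

/-- The Stanley depth of a monomial ideal: the largest `k` such that `I` admits a
Stanley decomposition all of whose Stanley spaces use at least `k` variables. -/
noncomputable def sdepth {n : ℕ} {K : Type*} [Field K]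
    (I : Ideal (MvPolynomial (Fin n) K)) : ℕ :=
  sSup {k | ∃ D : StanleyDecomp K I, ∀ i, k ≤ (D.Z i).card}

/-- `I` is a monomial ideal if it is generated by monomials. -/
def IsMonomialIdeal {n : ℕ} {K : Type*} [Field K]
    (I : Ideal (MvPolynomial (Fin n) K)) : Prop :=
  ∃ G : Set (Fin n →₀ ℕ), I = Ideal.span ((fun d => monomial d (1 : K)) '' G)

/-- The monomial prime ideal generated by the variables in `A`. -/
noncomputable def varIdeal {n : ℕ} (K : Type*) [Field K] (A : Finset (Fin n)) :
    Ideal (MvPolynomial (Fin n) K) :=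
  Ideal.span ((fun i => (X i : MvPolynomial (Fin n) K)) '' ↑A)

/-- The graded maximal ideal `(x_1, …, x_n)`. -/
noncomputable def maxIdeal (n : ℕ) (K : Type*) [Field K] :
    Ideal (MvPolynomial (Fin n) K) :=
  varIdeal K Finset.univ

/-!
Write `I = ⨅ l, P_l`, where `P_l` is generated by the variables in `A l`.

Upper bounds for the depth come from Koszul cohomology: a regular sequence of length `r` kills it
in all degrees below `r`. Let `B q` be disjoint sets of variables such that every `A l` contains
some `B q`. The wedge product of the forms `∑ y ∈ B q, X y • e_y`, and of the forms `e_y` for the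
variables `y` in no `B q`, is a cocycle with values in `I`, because its coefficients lie in the
product of the ideals `(B q)`. One of its coefficients is a monomial outside `𝔪 I`, whereas every
coboundary has its coefficients in `𝔪 I`.

Lower bounds for the Stanley depth come from partitions of the sets of variables meeting every
`A l` into intervals: an interval `[C, D]` yields the Stanley space `X^C K[D]`.

The two bounds are matched in three cases: every `A l` has a variable of its own; some `A k` has
none, but another member does; every variable lies in none or at least two of the `A l`.
-/

section Koszul

variable {R M ι : Type*} [CommRing R] [AddCommGroup M] [Module R M]

/-- The Koszul differential of `x : ι → R`, that is, left exterior multiplication by the `1`-form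
`x`. A `k`-cochain is an arbitrary function on lists of length `k`; it is not required to be
alternating, so that cochains lift freely along surjections of modules. -/
noncomputable def koszulWedge : (ι → R) →ₗ[R] (List ι → M) →ₗ[R] List ι → M :=
  LinearMap.mk₂ R
    (fun x c t => ∑ p : Fin t.length, (-1 : R) ^ (p : ℕ) • x (t.get p) • c (t.eraseIdx p))
    (fun x y c => by ext t; simp [add_smul, Finset.sum_add_distrib])
    (fun r x c => by ext t; simp [mul_smul, Finset.smul_sum, smul_comm r])
    (fun x c c' => by ext t; simp [Finset.sum_add_distrib])
    (fun r x c => by ext t; simp [Finset.smul_sum, smul_comm r])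

lemma koszulWedge_apply (x : ι → R) (c : List ι → M) (t : List ι) :
    koszulWedge x c t =
      ∑ p : Fin t.length, (-1 : R) ^ (p : ℕ) • x (t.get p) • c (t.eraseIdx p) :=
  rfl

lemma koszulWedge_nil (x : ι → R) (c : List ι → M) : koszulWedge x c [] = 0 :=
  rfl

lemma koszulWedge_cons (x : ι → R) (c : List ι → M) (j : ι) (t : List ι) :
    koszulWedge x c (j :: t) = x j • c t - koszulWedge x (fun s => c (j :: s)) t := by
  rw [koszulWedge_apply, koszulWedge_apply]
  refine (Fin.sum_univ_succ (n := t.length) _).trans ?_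
  simp [pow_succ, sub_eq_add_neg]

lemma koszulWedge_congr (x : ι → R) {c c' : List ι → M} {k : ℕ}
    (h : ∀ s : List ι, s.length = k → c s = c' s) {t : List ι} (ht : t.length = k + 1) :
    koszulWedge x c t = koszulWedge x c' t := by
  simp only [koszulWedge_apply]
  refine Finset.sum_congr rfl fun p _ => ?_
  rw [h _ (by rw [List.length_eraseIdx_of_lt p.2, ht, Nat.add_sub_cancel])]

lemma koszulWedge_comp {N : Type*} [AddCommGroup N] [Module R N] (x : ι → R) (f : M →ₗ[R] N)
    (c : List ι → M) (t : List ι) :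
    koszulWedge x (fun s => f (c s)) t = f (koszulWedge x c t) := by
  simp [koszulWedge_apply]

lemma koszulWedge_self (x : ι → R) (c : List ι → M) : koszulWedge x (koszulWedge x c) = 0 := by
  ext t
  induction t generalizing c with
  | nil => rfl
  | cons j t ih =>
    have hcons : (fun s => koszulWedge x c (j :: s)) =
        x j • c - koszulWedge x (fun s => c (j :: s)) :=
      funext fun s => koszulWedge_cons x c j s
    rw [koszulWedge_cons, hcons, map_sub, map_smul, Pi.sub_apply, ih]
    simp

lemma koszulWedge_anticomm (x y : ι → R) (c : List ι → M) :
    koszulWedge x (koszulWedge y c) = -koszulWedge y (koszulWedge x c) := by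
  have h := koszulWedge_self (x + y) c
  simp only [map_add, LinearMap.add_apply, koszulWedge_self, zero_add, add_zero] at h
  exact eq_neg_of_add_eq_zero_right h

lemma koszulWedge_foldr_eq_zero {L : List (ι → R)} {x : ι → R}
    (hx : x ∈ Submodule.span R {y | y ∈ L}) (c : List ι → M) :
    koszulWedge x (L.foldr (fun y => koszulWedge y) c) = 0 := by
  have hmem : ∀ L : List (ι → R), ∀ y ∈ L,
      koszulWedge y (L.foldr (fun y => koszulWedge y) c) = 0 := by
    intro L
    induction L with
    | nil => simp
    | cons z L ih =>
      intro y hy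
      rw [List.foldr_cons]
      rcases List.mem_cons.1 hy with rfl | hy
      · exact koszulWedge_self y _
      · rw [koszulWedge_anticomm, ih y hy, map_zero, neg_zero]
  induction hx using Submodule.span_induction with
  | mem y hy => exact hmem L y hy
  | zero => simp
  | add y z _ _ hy hz => simp [hy, hz]
  | smul r y _ hy => simp [hy]

lemma koszulWedge_mem_smul (x : ι → R) {N : Submodule R M} {c : List ι → M} (hc : ∀ t, c t ∈ N)
    (t : List ι) : koszulWedge x c t ∈ Ideal.span (Set.range x) • N := by
  rw [koszulWedge_apply]
  exact Submodule.sum_mem _ fun p _ => Submodule.smul_mem _ _ <|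
    Submodule.smul_mem_smul (Ideal.subset_span ⟨_, rfl⟩) (hc _)

lemma foldr_koszulWedge_mem_prod (L : List (ι → R)) (c : List ι → R) (t : List ι) :
    L.foldr (fun y => koszulWedge y) c t ∈
      (L.map fun y => Ideal.span (Set.range y)).prod := by
  induction L generalizing t with
  | nil => simp
  | cons y L ih => exact koszulWedge_mem_smul y ih t

lemma koszulWedge_eq_zero_of_forall_mem {x : ι → R} {t : List ι} (h : ∀ j ∈ t, x j = 0)
    (c : List ι → M) : koszulWedge x c t = 0 := by
  rw [koszulWedge_apply]
  exact Finset.sum_eq_zero fun p _ => by rw [h _ (List.get_mem t p), zero_smul, smul_zero]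

lemma foldr_koszulWedge_apply_map {α : Type*} (w : α → ι → R) (v : α → ι) {L : List α}
    (hL : L.Pairwise fun a b => w a (v b) = 0) (c : List ι → M) :
    (L.map w).foldr (fun y => koszulWedge y) c (L.map v) =
      (L.map fun a => w a (v a)).prod • c [] := by
  induction L with
  | nil => simp
  | cons a L ih =>
    rw [List.pairwise_cons] at hL
    simp only [List.map_cons, List.foldr_cons, List.prod_cons]
    rw [koszulWedge_cons, ih hL.2, mul_smul,
      koszulWedge_eq_zero_of_forall_mem (by simpa using hL.1), sub_zero]

/-- Vanishing of the `i`-th Koszul cohomology of `M` with respect to `x`. -/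
def KoszulExactAt (x : ι → R) (M : Type*) [AddCommGroup M] [Module R M] (i : ℕ) : Prop :=
  ∀ c : List ι → M, (∀ t, t.length = i + 1 → koszulWedge x c t = 0) →
    ∃ b : List ι → M, ∀ t, t.length = i → koszulWedge x b t = c t

/-- Contraction of a cochain with the vector `a`. -/
def koszulContract [Fintype ι] (a : ι → R) (c : List ι → M) (t : List ι) : M :=
  ∑ j, a j • c (j :: t)

lemma koszulWedge_koszulContract [Fintype ι] (x a : ι → R) (c : List ι → M) (t : List ι) :
    koszulWedge x (koszulContract a c) t =
      (∑ j, a j * x j) • c t - koszulContract a (koszulWedge x c) t := by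
  have hsum : koszulContract a c = ∑ j, a j • fun s => c (j :: s) := by
    ext s
    simp [koszulContract]
  simp only [hsum, map_sum, map_smul, koszulContract, koszulWedge_cons, Finset.sum_apply,
    Pi.smul_apply, smul_sub, Finset.sum_sub_distrib, smul_smul, Finset.sum_smul]
  abel

lemma koszulWedge_koszulContract_of_cocycle [Fintype ι] {x a : ι → R} {c : List ι → M} {i : ℕ}
    (hc : ∀ t, t.length = i + 1 → koszulWedge x c t = 0) {t : List ι} (ht : t.length = i) :
    koszulWedge x (koszulContract a c) t = (∑ j, a j * x j) • c t := by
  have hcontract : koszulContract a (koszulWedge x c) t = 0 :=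
    Finset.sum_eq_zero fun j _ => by rw [hc (j :: t) (by simp [ht]), smul_zero]
  rw [koszulWedge_koszulContract, hcontract, sub_zero]

lemma koszulExactAt_zero [Finite ι] {x : ι → R} {r : R} (hr : r ∈ Ideal.span (Set.range x))
    (hreg : IsSMulRegular M r) : KoszulExactAt x M 0 := by
  have := Fintype.ofFinite ι
  obtain ⟨a, rfl⟩ := Ideal.mem_span_range_iff_exists_fun.1 hr
  intro c hc
  refine ⟨0, fun t ht => hreg ?_⟩
  change _ • _ = _ • _
  rw [← koszulWedge_koszulContract_of_cocycle hc ht, List.length_eq_zero_iff.1 ht,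
    koszulWedge_nil, koszulWedge_nil, smul_zero]

lemma koszulExactAt_succ [Finite ι] {x : ι → R} {r : R} (hr : r ∈ Ideal.span (Set.range x))
    (hreg : IsSMulRegular M r) {i : ℕ} (hquot : KoszulExactAt x (QuotSMulTop r M) i) :
    KoszulExactAt x M (i + 1) := by
  have := Fintype.ofFinite ι
  obtain ⟨a, rfl⟩ := Ideal.mem_span_range_iff_exists_fun.1 hr
  set r := ∑ j, a j * x j
  intro c hc
  let π : M →ₗ[R] QuotSMulTop r M := Submodule.mkQ _
  have hπ : ∀ m, π m = 0 ↔ ∃ m', r • m' = m := fun m => by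
    simp [π, Submodule.mem_smul_pointwise_iff_exists]
  have hcontract := fun t => koszulWedge_koszulContract_of_cocycle (a := a) hc (t := t)
  obtain ⟨e, he⟩ := hquot (fun s => π (koszulContract a c s)) fun t ht => by
    rw [koszulWedge_comp, hcontract t ht]
    exact (hπ _).2 ⟨c t, rfl⟩
  choose e' he' using fun s => Submodule.mkQ_surjective _ (e s)
  obtain rfl : (fun s => π (e' s)) = e := funext he'
  have hdiv : ∀ t, ∃ m, t.length = i → r • m = koszulContract a c t - koszulWedge x e' t := by
    intro t
    by_cases ht : t.length = i
    · obtain ⟨m, hm⟩ := (hπ (koszulContract a c t - koszulWedge x e' t)).1 <| by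
        rw [map_sub, ← he t ht, koszulWedge_comp, sub_self]
      exact ⟨m, fun _ => hm⟩
    · exact ⟨0, fun h => absurd h ht⟩
  choose b hb using hdiv
  refine ⟨b, fun t ht => hreg ?_⟩
  calc r • koszulWedge x b t
      = koszulWedge x (r • b) t := by rw [map_smul, Pi.smul_apply]
    _ = koszulWedge x (koszulContract a c - koszulWedge x e') t := koszulWedge_congr x hb ht
    _ = koszulWedge x (koszulContract a c) t := by rw [map_sub, koszulWedge_self, sub_zero]
    _ = r • c t := hcontract t ht

theorem koszulExactAt_of_isWeaklyRegular [Finite ι] {x : ι → R} {rs : List R}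
    (hrs : ∀ r ∈ rs, r ∈ Ideal.span (Set.range x))
    (hreg : RingTheory.Sequence.IsWeaklyRegular M rs) {i : ℕ} (hi : i < rs.length) :
    KoszulExactAt x M i := by
  induction rs generalizing M i with
  | nil => simp at hi
  | cons r rs ih =>
    rw [RingTheory.Sequence.isWeaklyRegular_cons_iff] at hreg
    rw [List.forall_mem_cons] at hrs
    cases i with
    | zero => exact koszulExactAt_zero hrs.1 hreg.1
    | succ i => exact koszulExactAt_succ hrs.1 hreg.1 (ih hrs.2 hreg.2 (Nat.lt_of_succ_lt_succ hi))

/-- The `w a` multiply to a Koszul cocycle with values in `I`, and its value at the list of all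
`v a` cannot be that of a coboundary. -/
theorem length_le_card_of_isWeaklyRegular [Finite ι] {α : Type*} [Fintype α] {x : ι → R}
    {I : Ideal R} (w : α → ι → R) (v : α → ι) (hx : x ∈ Submodule.span R (Set.range w))
    (hw : Pairwise fun a b => w a (v b) = 0) (hI : ∏ a, Ideal.span (Set.range (w a)) ≤ I)
    (hv : ∏ a, w a (v a) ∉ Ideal.span (Set.range x) * I) {rs : List R}
    (hrs : ∀ r ∈ rs, r ∈ Ideal.span (Set.range x))
    (hreg : RingTheory.Sequence.IsWeaklyRegular I rs) : rs.length ≤ Fintype.card α := by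
  by_contra! hlt
  let L : List α := Finset.univ.toList
  let c : List ι → R := (L.map w).foldr (fun y => koszulWedge y) fun _ => 1
  have hcI : ∀ t, c t ∈ I := fun t => hI <| by
    have := foldr_koszulWedge_mem_prod (L.map w) (fun _ => 1) t
    rwa [List.map_map, Finset.prod_map_toList] at this
  have hcocycle : koszulWedge x c = 0 := koszulWedge_foldr_eq_zero (by simpa [L] using! hx) _
  have hcI' : ∀ t, koszulWedge x (fun s => (⟨c s, hcI s⟩ : I)) t = 0 := fun t =>
    Subtype.ext <| (koszulWedge_comp x I.subtype _ t).symm.trans (congrFun hcocycle t)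
  obtain ⟨b, hb⟩ := koszulExactAt_of_isWeaklyRegular hrs hreg hlt _ fun t _ => hcI' t
  have hcv : c (L.map v) = ∏ a, w a (v a) := by
    have hL : L.Pairwise fun a b => w a (v b) = 0 := (Finset.nodup_toList _).imp (hw ·)
    exact (foldr_koszulWedge_apply_map w v hL _).trans <| by
      rw [smul_eq_mul, mul_one, Finset.prod_map_toList]
  have hcb : koszulWedge x (fun s => (b s : R)) (L.map v) = c (L.map v) :=
    (koszulWedge_comp x I.subtype b _).trans
      (congrArg Subtype.val (hb (L.map v) (by simp [L])))
  exact hv (hcv ▸ hcb ▸ koszulWedge_mem_smul x (fun s => (b s).2) (L.map v))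

end Koszul

section Depth

variable {n : ℕ} {K : Type*} [Field K]

lemma maxIdeal_eq_span_range_X : maxIdeal n K = Ideal.span (Set.range X) := by
  rw [maxIdeal, varIdeal, Finset.coe_univ, Set.image_univ]

lemma coeff_eq_zero_of_mem_span_range_X_mul {σ R : Type*} [CommSemiring R]
    {I : Ideal (MvPolynomial σ R)} {m : σ →₀ ℕ}
    (h : ∀ j ∈ m.support, ∀ g ∈ I, coeff (m - Finsupp.single j 1) g = 0)
    {f : MvPolynomial σ R} (hf : f ∈ Ideal.span (Set.range X) * I) : coeff m f = 0 := by
  classical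
  rw [mul_comm, ← smul_eq_mul] at hf
  obtain ⟨a, ha, rfl⟩ := (Submodule.mem_ideal_smul_span_iff_exists_sum I X f).1 hf
  rw [Finsupp.sum, coeff_sum]
  refine Finset.sum_eq_zero fun j _ => ?_
  rw [smul_eq_mul, coeff_mul_X']
  split_ifs with hj
  exacts [h j hj _ (ha j), rfl]

/-- A set of variables meeting every member of the family `A`; the squarefree monomials in
`⨅ l, varIdeal K (A l)` are those whose support is transversal. -/
def IsTransversal {ι σ : Type*} (A : ι → Finset σ) (T : Finset σ) : Prop :=
  ∀ l, ∃ a ∈ T, a ∈ A l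

lemma IsTransversal.mono {ι σ : Type*} {A : ι → Finset σ} {T T' : Finset σ}
    (hT : IsTransversal A T) (h : T ⊆ T') : IsTransversal A T' := fun l =>
  let ⟨a, ha, hal⟩ := hT l
  ⟨a, h ha, hal⟩

lemma mem_iInf_varIdeal_iff {ι : Type*} {A : ι → Finset (Fin n)} {f : MvPolynomial (Fin n) K} :
    f ∈ ⨅ l, varIdeal K (A l) ↔ ∀ m ∈ f.support, IsTransversal A m.support := by
  simp only [Submodule.mem_iInf, varIdeal, mem_ideal_span_X_image, IsTransversal]
  simp only [Finsupp.mem_support_iff, SetLike.mem_coe, and_comm]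
  exact forall_comm.trans (forall_congr' fun m => forall_comm)

lemma prod_X_notMem_maxIdeal_mul {ι κ : Type*} [Fintype κ] {A : ι → Finset (Fin n)}
    {z : κ → Fin n} (hz : ∀ q, ∃ l, ∀ p, p ≠ q → z p ∉ A l) :
    ∏ q, (X (z q) : MvPolynomial (Fin n) K) ∉ maxIdeal n K * ⨅ l, varIdeal K (A l) := by
  classical
  have hprod : ∏ q, (X (z q) : MvPolynomial (Fin n) K) =
      monomial (∑ q, Finsupp.single (z q) 1) 1 := (monomial_sum_one _ _).symm
  intro hmem
  rw [hprod, maxIdeal_eq_span_range_X] at hmem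
  have hcoeff := coeff_eq_zero_of_mem_span_range_X_mul (m := ∑ q, Finsupp.single (z q) 1) ?_ hmem
  · simp at hcoeff
  intro j hj g hg
  obtain ⟨q, -, hjq⟩ := Finset.mem_biUnion.1 (Finsupp.support_finsetSum hj)
  obtain rfl : j = z q := by simpa using Finsupp.support_single_subset hjq
  obtain ⟨l, hl⟩ := hz q
  rw [← Finset.add_sum_erase _ _ (Finset.mem_univ q), add_tsub_cancel_left, ← notMem_support_iff]
  intro hsupp
  obtain ⟨a, ha, hal⟩ := mem_iInf_varIdeal_iff.1 hg _ hsupp l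
  obtain ⟨p, hp, hap⟩ := Finset.mem_biUnion.1 (Finsupp.support_finsetSum ha)
  obtain rfl : a = z p := by simpa using Finsupp.support_single_subset hap
  exact hl p (Finset.ne_of_mem_erase hp) hal

lemma mem_span_range_single_indicator {R ι κ : Type*} [Semiring R] [Fintype ι] [DecidableEq ι]
    [Fintype κ] {B : κ → Finset ι} (hB : Pairwise fun p q => Disjoint (B p) (B q)) (x : ι → R) :
    x ∈ Submodule.span R (Set.range (Sum.elim
      (fun y : {y // y ∈ (Finset.univ.biUnion B)ᶜ} => Pi.single y.1 1)
      (fun q => (B q : Set ι).indicator x))) := by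
  set N := (Finset.univ.biUnion B)ᶜ
  have hN : (N : Set ι).indicator x = ∑ y : {y // y ∈ N}, x y • Pi.single y.1 1 := by
    rw [Finset.sum_coe_sort N fun y => x y • (Pi.single y 1 : ι → R)]
    ext j
    simp [Finset.sum_apply, Set.indicator_apply, Pi.single_apply]
  have hBsum : (N : Set ι)ᶜ.indicator x = ∑ q, (B q : Set ι).indicator x := by
    ext j
    rw [Finset.sum_apply, ← Finset.indicator_biUnion_apply _ _ fun p _ q _ hpq =>
      Finset.disjoint_coe.2 (hB hpq)]
    simp [N]
  have hx : x = _ + _ := (Set.indicator_self_add_compl (N : Set ι) x).symm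
  nth_rw 2 [hx]
  rw [hN, hBsum]
  refine add_mem (sum_mem fun y _ => Submodule.smul_mem _ _ ?_) (sum_mem fun q _ => ?_)
  · exact Submodule.subset_span ⟨Sum.inl y, rfl⟩
  · exact Submodule.subset_span ⟨Sum.inr q, rfl⟩

lemma span_range_indicator_X_le (B : Finset (Fin n)) :
    Ideal.span (Set.range ((B : Set (Fin n)).indicator (X : _ → MvPolynomial (Fin n) K))) ≤
      varIdeal K B := by
  rw [Ideal.span_le]
  rintro _ ⟨j, rfl⟩
  by_cases hj : j ∈ (B : Set (Fin n))
  · rw [Set.indicator_of_mem hj]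
    exact Ideal.subset_span ⟨j, hj, rfl⟩
  · rw [Set.indicator_of_notMem hj]
    exact zero_mem _

lemma varIdeal_mono {A B : Finset (Fin n)} (h : A ⊆ B) : varIdeal K A ≤ varIdeal K B :=
  Ideal.span_mono (Set.image_mono (Finset.coe_subset.2 h))

theorem moduleDepth_iInf_varIdeal_le {ι κ : Type*} [Fintype κ] {A : ι → Finset (Fin n)}
    {B : κ → Finset (Fin n)} (hB : Pairwise fun p q => Disjoint (B p) (B q))
    (hBA : ∀ l, ∃ q, B q ⊆ A l) {z : κ → Fin n} (hzB : ∀ q, z q ∈ B q)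
    (hzA : ∀ q, ∃ l, ∀ p, p ≠ q → z p ∉ A l) :
    moduleDepth (MvPolynomial (Fin n) K) (maxIdeal n K) ↥(⨅ l, varIdeal K (A l)) ≤
      (Finset.univ.biUnion B)ᶜ.card + Fintype.card κ := by
  classical
  refine csSup_le' ?_
  rintro _ ⟨rs, rfl, hrs, hreg⟩
  let N := (Finset.univ.biUnion B)ᶜ
  let w : {y // y ∈ N} ⊕ κ → Fin n → MvPolynomial (Fin n) K :=
    Sum.elim (fun y => Pi.single y.1 1) (fun q => (B q : Set (Fin n)).indicator X)
  let v : {y // y ∈ N} ⊕ κ → Fin n := Sum.elim Subtype.val z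
  have hw : Pairwise fun a b => w a (v b) = 0 := by
    have hN : ∀ y ∈ N, ∀ q, y ∉ B q := by simp [N]
    rintro (y | p) (y' | q) hne
    · exact Pi.single_eq_of_ne (fun h => hne (congrArg Sum.inl (Subtype.ext h.symm))) _
    · exact Pi.single_eq_of_ne (fun h : z q = y => hN y y.2 q (h ▸ hzB q)) _
    · exact Set.indicator_of_notMem (hN y' y'.2 p) _
    · have hpq : Disjoint (B p) (B q) := hB fun h => hne (congrArg Sum.inr h)
      exact Set.indicator_of_notMem (Finset.disjoint_right.1 hpq (hzB q)) _
  have hI : ∏ a, Ideal.span (Set.range (w a)) ≤ ⨅ l, varIdeal K (A l) := le_iInf fun l => by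
    obtain ⟨q, hq⟩ := hBA l
    exact (Ideal.prod_le_inf.trans (Finset.inf_le (Finset.mem_univ (Sum.inr q)))).trans
      ((span_range_indicator_X_le (B q)).trans (varIdeal_mono hq))
  have hprod : ∏ a, w a (v a) = ∏ q, X (z q) := by
    simp [w, v, Fintype.prod_sum_type, hzB]
  have hcard : Fintype.card ({y // y ∈ N} ⊕ κ) = N.card + Fintype.card κ := by
    rw [Fintype.card_sum, Fintype.card_coe]
  rw [← hcard]
  rw [maxIdeal_eq_span_range_X] at hrs
  refine length_le_card_of_isWeaklyRegular w v (mem_span_range_single_indicator hB X) hw hI ?_ hrs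
    hreg.toIsWeaklyRegular
  rw [hprod, ← maxIdeal_eq_span_range_X]
  exact prod_X_notMem_maxIdeal_mul hzA

/-- An element lying in at least two members of the family `A`. -/
def IsShared {ι σ : Type*} (A : ι → Finset σ) (a : σ) : Prop :=
  ∃ l l', l ≠ l' ∧ a ∈ A l ∧ a ∈ A l'

lemma index_eq_of_not_isShared {ι σ : Type*} {A : ι → Finset σ} {a : σ} (ha : ¬IsShared A a)
    {l l' : ι} (hl : a ∈ A l) (hl' : a ∈ A l') : l = l' :=
  by_contra fun hne => ha ⟨l, l', hne, hl, hl'⟩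

theorem moduleDepth_le_card_add_card {ι : Type*} [Fintype ι] {A : ι → Finset (Fin n)}
    (hA : ∀ l, ∃ a ∈ A l, ¬IsShared A a) :
    moduleDepth (MvPolynomial (Fin n) K) (maxIdeal n K) ↥(⨅ l, varIdeal K (A l)) ≤
      (Finset.univ.biUnion A)ᶜ.card + Fintype.card ι := by
  choose z hzA hz using hA
  obtain ⟨B, hBA, hsup, hB⟩ := Fintype.exists_disjointed_le A
  rw [Finset.sup_eq_biUnion, Finset.sup_eq_biUnion] at hsup
  rw [← hsup]
  refine moduleDepth_iInf_varIdeal_le hB (fun l => ⟨l, hBA l⟩) (z := z) (fun q => ?_) fun q =>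
    ⟨q, fun p hpq hmem => hpq (index_eq_of_not_isShared (hz p) (hzA p) hmem)⟩
  have hmem : z q ∈ Finset.univ.biUnion B :=
    hsup ▸ Finset.mem_biUnion.2 ⟨q, Finset.mem_univ q, hzA q⟩
  obtain ⟨p, -, hp⟩ := Finset.mem_biUnion.1 hmem
  exact index_eq_of_not_isShared (hz q) (hBA p hp) (hzA q) ▸ hp

theorem moduleDepth_le_card_add_two {ι : Type*} {A : ι → Finset (Fin n)} {i k : ι}
    (hik : ¬A i ⊆ A k) (hki : ¬A k ⊆ A i) (hA : ∀ l, A i ⊆ A l ∨ A k \ A i ⊆ A l) :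
    moduleDepth (MvPolynomial (Fin n) K) (maxIdeal n K) ↥(⨅ l, varIdeal K (A l)) ≤
      (A i ∪ A k)ᶜ.card + 2 := by
  obtain ⟨b, hbi, hbk⟩ := Finset.not_subset.1 hik
  obtain ⟨a, hak, hai⟩ := Finset.not_subset.1 hki
  have hunion : Finset.univ.biUnion ![A i, A k \ A i] = A i ∪ A k := by
    ext v
    simp [Fin.exists_fin_two, or_and_left, em]
  rw [← hunion]
  refine moduleDepth_iInf_varIdeal_le (z := ![b, a]) ?_ ?_ ?_ ?_
  · intro p q hpq
    fin_cases p <;> fin_cases q <;>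
      simp_all [Finset.disjoint_sdiff, Finset.sdiff_disjoint]
  · simpa [Fin.exists_fin_two] using hA
  · simp [Fin.forall_fin_two, *]
  · rw [Fin.forall_fin_two]
    exact ⟨⟨i, by simp [Fin.forall_fin_two, hai]⟩, ⟨k, by simp [Fin.forall_fin_two, hbk]⟩⟩

end Depth

section StanleyDepth

variable {n : ℕ} {K : Type*} [Field K]

/-- The exponent vector of the squarefree monomial `∏ i ∈ C, X i`. -/
noncomputable def squarefreeExponent (C : Finset (Fin n)) : Fin n →₀ ℕ :=
  Finsupp.indicator C fun _ _ => 1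

lemma squarefreeExponent_apply (C : Finset (Fin n)) (j : Fin n) :
    squarefreeExponent C j = if j ∈ C then 1 else 0 := by
  classical
  simp [squarefreeExponent, Finsupp.indicator_apply]

lemma support_squarefreeExponent (C : Finset (Fin n)) : (squarefreeExponent C).support = C := by
  ext j
  simp [squarefreeExponent_apply]

lemma squarefreeExponent_le_iff {C : Finset (Fin n)} {m : Fin n →₀ ℕ} :
    squarefreeExponent C ≤ m ↔ C ⊆ m.support := by
  refine ⟨fun h => support_squarefreeExponent C ▸ Finsupp.support_mono h, fun h j => ?_⟩
  rw [squarefreeExponent_apply]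
  split_ifs with hj
  exacts [Nat.one_le_iff_ne_zero.2 (Finsupp.mem_support_iff.1 (h hj)), Nat.zero_le _]

lemma stanleySpace_squarefreeExponent {C D : Finset (Fin n)} (hCD : C ⊆ D) :
    stanleySpace K (squarefreeExponent C) D =
      restrictSupport K {m | m.support ∈ Set.Icc C D} := by
  rw [restrictSupport_eq_span, stanleySpace]
  congr 1
  ext f
  constructor
  · rintro ⟨e, he, rfl⟩
    refine ⟨_, ⟨squarefreeExponent_le_iff.1 le_self_add, ?_⟩, rfl⟩
    refine Finsupp.support_add.trans (Finset.union_subset ?_ fun j hj => ?_)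
    · exact (support_squarefreeExponent C).trans_subset hCD
    · exact he j (Finsupp.mem_support_iff.1 hj)
  · rintro ⟨m, ⟨hCm, hmD⟩, rfl⟩
    refine ⟨m - squarefreeExponent C, fun j hj => ?_, ?_⟩
    · exact hmD (Finsupp.support_mono tsub_le_self (Finsupp.mem_support_iff.2 hj))
    · rw [add_tsub_cancel_of_le (squarefreeExponent_le_iff.2 hCm)]

lemma iSupIndep_restrictSupport {σ R ι : Type*} [CommSemiring R] {E : ι → Set (σ →₀ ℕ)}
    (hE : Pairwise fun i j => Disjoint (E i) (E j)) :
    iSupIndep fun i => restrictSupport R (E i) := by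
  intro i
  have hle : ⨆ j, ⨆ (_ : j ≠ i), restrictSupport R (E j) ≤ restrictSupport R (E i)ᶜ :=
    iSup₂_le fun j hj => restrictSupport_mono R (hE hj).subset_compl_right
  refine Submodule.disjoint_def.2 fun f hf hf' => ?_
  rw [← support_eq_empty, Finset.eq_empty_iff_forall_notMem]
  exact fun m hm => hle hf' hm (hf hm)

lemma iSup_restrictSupport {σ R ι : Type*} [CommSemiring R] (E : ι → Set (σ →₀ ℕ)) :
    ⨆ i, restrictSupport R (E i) = restrictSupport R (⋃ i, E i) := by
  simp only [restrictSupport_eq_span, Set.image_iUnion, Submodule.span_iUnion]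

lemma le_sdepth {I : Ideal (MvPolynomial (Fin n) K)} (hI : I ≠ ⊥) {k : ℕ} (D : StanleyDecomp K I)
    (hD : ∀ i, k ≤ (D.Z i).card) : k ≤ sdepth I := by
  refine le_csSup ⟨n, ?_⟩ ⟨D, hD⟩
  rintro k ⟨D, hD⟩
  have : Nonempty (Fin D.m) := by
    by_contra hempty
    rw [not_nonempty_iff] at hempty
    have htotal := D.total
    rw [iSup_of_empty] at htotal
    exact hI ((Submodule.restrictScalars_eq_bot_iff K _ _).1 htotal.symm)
  exact (hD (Classical.arbitrary _)).trans (card_finset_fin_le _)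

theorem le_sdepth_of_interval_partition {I : Ideal (MvPolynomial (Fin n) K)} {α : Type*}
    [Finite α] [Nonempty α] {C D : α → Finset (Fin n)} (hCD : ∀ a, C a ⊆ D a)
    (hdisj : Pairwise fun a b => Disjoint (Set.Icc (C a) (D a)) (Set.Icc (C b) (D b)))
    (hI : ∀ f, f ∈ I ↔ ∀ m ∈ f.support, ∃ a, m.support ∈ Set.Icc (C a) (D a)) {k : ℕ}
    (hk : ∀ a, k ≤ (D a).card) : k ≤ sdepth I := by
  let e := (Finite.equivFin α).symm
  let E : α → Set (Fin n →₀ ℕ) := fun a => {m | m.support ∈ Set.Icc (C a) (D a)}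
  have hspace : ∀ a, stanleySpace K (squarefreeExponent (C a)) (D a) = restrictSupport K (E a) :=
    fun a => stanleySpace_squarefreeExponent (hCD a)
  have hmem : ∀ a, monomial (squarefreeExponent (C a)) (1 : K) ∈ I := fun a =>
    (hI _).2 fun m hm => ⟨a, by
      rw [Finset.mem_singleton.1 (support_monomial_subset hm), support_squarefreeExponent]
      exact Set.left_mem_Icc.2 (hCD a)⟩
  have hbot : I ≠ ⊥ := fun h => by simpa [h] using hmem (Classical.arbitrary α)
  refine le_sdepth hbot ⟨Nat.card α, fun i => squarefreeExponent (C (e i)), fun i => D (e i),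
    fun i => hmem _, ?_, ?_⟩ fun i => hk _
  · simp only [hspace]
    refine iSupIndep_restrictSupport fun i j hij => ?_
    exact (hdisj (e.injective.ne hij)).preimage Finsupp.support
  · simp only [hspace]
    rw [e.iSup_comp (g := fun a => restrictSupport K (E a)), iSup_restrictSupport]
    ext f
    simp only [mem_restrictSupport_iff, Submodule.restrictScalars_mem, hI, E, Set.subset_def,
      Set.mem_iUnion, Finset.mem_coe, Set.mem_ofPred_eq]

lemma sdiff_eq_and_union_eq_of_mem_Icc {σ : Type*} [DecidableEq σ] {T T' F : Finset σ}
    (hT' : T' ∈ Set.Icc (T \ F) (T ∪ F)) : T' \ F = T \ F ∧ T' ∪ F = T ∪ F := by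
  obtain ⟨hlow, hup⟩ := hT'
  constructor <;> ext a <;> have := @hlow a <;> have := @hup a <;> grind

/-- It suffices to assign to every transversal set `T` a set `F T` of elements that can be freely
added or removed: the intervals `[T \ F T, T ∪ F T]` then partition the transversal sets. -/
theorem le_sdepth_of_free {ι : Type*} {A : ι → Finset (Fin n)} (hA : ∀ l, (A l).Nonempty)
    {F : Finset (Fin n) → Finset (Fin n)}
    (hF : ∀ T, IsTransversal A T → IsTransversal A (T \ F T))
    (hconst : ∀ T, ∀ T' ∈ Set.Icc (T \ F T) (T ∪ F T), F T' = F T) {k : ℕ}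
    (hk : ∀ T, IsTransversal A T → k ≤ (T ∪ F T).card) :
    k ≤ sdepth (⨅ l, varIdeal K (A l)) := by
  let interval : {T // IsTransversal A T} → Finset (Fin n) × Finset (Fin n) :=
    fun T => (T.1 \ F T, T.1 ∪ F T)
  have heq : ∀ T T' : {T // IsTransversal A T},
      T'.1 ∈ Set.Icc (interval T).1 (interval T).2 → interval T' = interval T := by
    intro T T' h
    obtain ⟨hsdiff, hunion⟩ := sdiff_eq_and_union_eq_of_mem_Icc h
    simp only [interval, hconst T.1 T'.1 h, hsdiff, hunion]
  have huniv : IsTransversal A Finset.univ := fun l => (hA l).imp fun a ha => ⟨by simp, ha⟩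
  have : Nonempty (Set.range interval) := ⟨⟨_, ⟨_, huniv⟩, rfl⟩⟩
  refine le_sdepth_of_interval_partition (α := Set.range interval) (C := fun p => p.1.1)
    (D := fun p => p.1.2) ?_ ?_ ?_ ?_
  · rintro ⟨_, T, rfl⟩
    exact Finset.sdiff_subset.trans Finset.subset_union_left
  · rintro ⟨_, T, rfl⟩ ⟨_, T', rfl⟩ hne
    refine Set.disjoint_left.2 fun U hU hU' => hne (Subtype.ext ?_)
    have hUA : IsTransversal A U := (hF T.1 T.2).mono hU.1
    exact (heq T ⟨U, hUA⟩ hU).symm.trans (heq T' ⟨U, hUA⟩ hU')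
  · intro f
    rw [mem_iInf_varIdeal_iff]
    refine forall₂_congr fun m _ => ⟨fun hm => ?_, ?_⟩
    · exact ⟨⟨_, ⟨_, hm⟩, rfl⟩, Finset.sdiff_subset, Finset.subset_union_left⟩
    · rintro ⟨⟨_, T, rfl⟩, hT⟩
      exact (hF T.1 T.2).mono hT.1
  · rintro ⟨_, T, rfl⟩
    exact hk T.1 T.2

end StanleyDepth

section FreeParts

variable {ι σ : Type*} {A : ι → Finset σ} {T T' : Finset σ} {a : σ} {i j k l : ι}

lemma IsShared.exists_ne (ha : IsShared A a) (l : ι) : ∃ l', l' ≠ l ∧ a ∈ A l' := by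
  obtain ⟨l₁, l₂, hne, h₁, h₂⟩ := ha
  by_cases hl : l₁ = l
  · exact ⟨l₂, hl ▸ hne.symm, h₂⟩
  · exact ⟨l₁, hl, h₁⟩

/-- The set `T` meets `A l` in a shared element, so that the unshared elements of `A l` do not
affect whether `T` is transversal. -/
def SharedMeets (A : ι → Finset σ) (T : Finset σ) (l : ι) : Prop :=
  ∃ a ∈ T, IsShared A a ∧ a ∈ A l

lemma card_add_two_le_card {N D : Finset σ} {a b : σ} (hND : N ⊆ D) (ha : a ∈ D)
    (hb : b ∈ D) (haN : a ∉ N) (hbN : b ∉ N) (hab : a ≠ b) : N.card + 2 ≤ D.card := by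
  classical
  have hcard : (insert a (insert b N)).card = N.card + 2 := by
    rw [Finset.card_insert_of_notMem (by simp [hab, haN]), Finset.card_insert_of_notMem hbN]
  rw [← hcard]
  exact Finset.card_le_card (Finset.insert_subset ha (Finset.insert_subset hb hND))

lemma union_eq_biUnion_of_forall_isShared [Fintype ι] [DecidableEq σ]
    (hijk : ∀ l, l = i ∨ l = j ∨ l = k)
    (hA : ∀ l, ∀ a ∈ A l, IsShared A a) : A i ∪ A k = Finset.univ.biUnion A := by
  refine (Finset.union_subset (Finset.subset_biUnion_of_mem A (Finset.mem_univ i))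
    (Finset.subset_biUnion_of_mem A (Finset.mem_univ k))).antisymm fun a ha => ?_
  obtain ⟨l, -, hal⟩ := Finset.mem_biUnion.1 ha
  obtain ⟨l', hlj, hal'⟩ := (hA l a hal).exists_ne j
  rcases hijk l' with rfl | rfl | rfl
  exacts [Finset.mem_union_left _ hal', absurd rfl hlj, Finset.mem_union_right _ hal']

variable [Fintype σ]

open Classical in
/-- The unshared elements that are irrelevant to the transversality of `T`, because the member of
`A` containing them, if any, already meets `T` in a shared element. -/
noncomputable def unsharedFree (A : ι → Finset σ) (T : Finset σ) : Finset σ :=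
  {a | ¬IsShared A a ∧ ∀ l, a ∈ A l → SharedMeets A T l}

lemma mem_unsharedFree :
    a ∈ unsharedFree A T ↔ ¬IsShared A a ∧ ∀ l, a ∈ A l → SharedMeets A T l := by
  simp [unsharedFree]

variable [DecidableEq σ]

lemma IsTransversal.sdiff_unsharedFree (hT : IsTransversal A T) :
    IsTransversal A (T \ unsharedFree A T) := by
  intro l
  by_cases hl : SharedMeets A T l
  · obtain ⟨w, hwT, hw, hwl⟩ := hl
    exact ⟨w, Finset.mem_sdiff.2 ⟨hwT, fun h => (mem_unsharedFree.1 h).1 hw⟩, hwl⟩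
  · obtain ⟨a, haT, hal⟩ := hT l
    exact ⟨a, Finset.mem_sdiff.2 ⟨haT, fun h => hl ((mem_unsharedFree.1 h).2 l hal)⟩, hal⟩

lemma unsharedFree_eq_of_mem_Icc
    (hT' : T' ∈ Set.Icc (T \ unsharedFree A T) (T ∪ unsharedFree A T)) :
    unsharedFree A T' = unsharedFree A T := by
  have hshared : ∀ w, IsShared A w → (w ∈ T' ↔ w ∈ T) := by
    intro w hw
    have hnot : w ∉ unsharedFree A T := fun h => (mem_unsharedFree.1 h).1 hw
    refine ⟨fun h => ?_, fun h => hT'.1 (Finset.mem_sdiff.2 ⟨h, hnot⟩)⟩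
    exact (Finset.mem_union.1 (hT'.2 h)).resolve_right hnot
  have hmeets : ∀ l, SharedMeets A T' l ↔ SharedMeets A T l := fun l =>
    exists_congr fun w => ⟨fun h => ⟨(hshared w h.2.1).1 h.1, h.2⟩,
      fun h => ⟨(hshared w h.2.1).2 h.1, h.2⟩⟩
  ext a
  simp only [mem_unsharedFree, hmeets]

lemma exists_mem_union_unsharedFree (hT : IsTransversal A T)
    (hl : (∃ a ∈ A l, ¬IsShared A a) ∨ ¬SharedMeets A T l) :
    ∃ a ∈ T ∪ unsharedFree A T, a ∈ A l ∧ ¬IsShared A a := by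
  by_cases hmeets : SharedMeets A T l
  · obtain ⟨a, hal, ha⟩ := hl.resolve_right (not_not.2 hmeets)
    refine ⟨a, Finset.mem_union_right _ (mem_unsharedFree.2 ⟨ha, fun l' hl' => ?_⟩), hal, ha⟩
    exact index_eq_of_not_isShared ha hal hl' ▸ hmeets
  · obtain ⟨a, haT, hal⟩ := hT l
    exact ⟨a, Finset.mem_union_left _ haT, hal, fun ha => hmeets ⟨a, haT, ha, hal⟩⟩

lemma card_add_card_le_card_union_unsharedFree [Fintype ι] (hT : IsTransversal A T)
    (hA : ∀ l, ∃ a ∈ A l, ¬IsShared A a) :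
    (Finset.univ.biUnion A)ᶜ.card + Fintype.card ι ≤ (T ∪ unsharedFree A T).card := by
  choose s hs hsA hsh using fun l => exists_mem_union_unsharedFree hT (Or.inl (hA l))
  have hinj : Function.Injective s := fun l l' h =>
    index_eq_of_not_isShared (hsh l) (hsA l) (h ▸ hsA l')
  have hdisj : Disjoint (Finset.univ.biUnion A)ᶜ (Finset.univ.map ⟨s, hinj⟩) := by
    simp only [Finset.disjoint_right, Finset.mem_map, Finset.mem_univ, true_and,
      Finset.mem_compl, not_not, Finset.mem_biUnion]
    rintro _ ⟨l, rfl⟩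
    exact ⟨l, hsA l⟩
  rw [← Finset.card_univ, ← Finset.card_map ⟨s, hinj⟩, ← Finset.card_union_of_disjoint hdisj]
  refine Finset.card_le_card (Finset.union_subset (fun a ha => ?_) ?_)
  · have hnot : ∀ l, a ∉ A l := by simpa using ha
    exact Finset.mem_union_right _ <| mem_unsharedFree.2
      ⟨fun ⟨l, _, _, h, _⟩ => hnot l h, fun l h => absurd h (hnot l)⟩
  · rintro _ ha
    obtain ⟨l, -, rfl⟩ := Finset.mem_map.1 ha
    exact hs l

lemma card_compl_add_two_le_card_union_unsharedFree (hijk : ∀ l, l = i ∨ l = j ∨ l = k)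
    (hi : SharedMeets A T i) (hk : SharedMeets A T k)
    (hj : ∃ a ∈ T ∪ unsharedFree A T, a ∈ A j ∧ ¬IsShared A a) :
    (A j ∪ A k)ᶜ.card + 2 ≤ (T ∪ unsharedFree A T).card := by
  obtain ⟨w, hwT, hw, hwk⟩ := hk
  obtain ⟨s, hsT, hsj, hs⟩ := hj
  refine card_add_two_le_card (a := w) (b := s) (fun a ha => ?_) (Finset.mem_union_left _ hwT) hsT
    (by simp [hwk]) (by simp [hsj]) fun h => hs (h ▸ hw)
  obtain ⟨haj, hak⟩ : a ∉ A j ∧ a ∉ A k := by simpa using ha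
  have hai : ∀ l, a ∈ A l → l = i := by
    intro l hl
    rcases hijk l with rfl | rfl | rfl
    exacts [rfl, absurd hl haj, absurd hl hak]
  refine Finset.mem_union_right _ <| mem_unsharedFree.2
    ⟨fun hshared => ?_, fun l hl => hai l hl ▸ hi⟩
  obtain ⟨l, hne, hl⟩ := hshared.exists_ne i
  exact hne (hai l hl)

lemma min_card_compl_add_two_le_card_union_unsharedFree (hijk : ∀ l, l = i ∨ l = j ∨ l = k)
    (hk : ∀ a ∈ A k, IsShared A a)
    (hij : (∃ a ∈ A i, ¬IsShared A a) ∨ ∃ a ∈ A j, ¬IsShared A a) (hT : IsTransversal A T) :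
    min (A i ∪ A k)ᶜ.card (A j ∪ A k)ᶜ.card + 2 ≤ (T ∪ unsharedFree A T).card := by
  have hjik : ∀ l, l = j ∨ l = i ∨ l = k := fun l => or_left_comm.1 (hijk l)
  obtain ⟨w, hwT, hwk⟩ := hT k
  have hmeets_k : SharedMeets A T k := ⟨w, hwT, hk w hwk, hwk⟩
  have hmeets_ij : SharedMeets A T i ∨ SharedMeets A T j := by
    obtain ⟨l, hlk, hwl⟩ := (hk w hwk).exists_ne k
    rcases hijk l with rfl | rfl | rfl
    exacts [Or.inl ⟨w, hwT, hk w hwk, hwl⟩, Or.inr ⟨w, hwT, hk w hwk, hwl⟩, absurd rfl hlk]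
  set m := min (A i ∪ A k)ᶜ.card (A j ∪ A k)ᶜ.card
  have hbound_j (hi : SharedMeets A T i)
      (hj : (∃ a ∈ A j, ¬IsShared A a) ∨ ¬SharedMeets A T j) :
      m + 2 ≤ (T ∪ unsharedFree A T).card :=
    (Nat.add_le_add_right (min_le_right _ _) 2).trans <|
      card_compl_add_two_le_card_union_unsharedFree hijk hi hmeets_k
        (exists_mem_union_unsharedFree hT hj)
  have hbound_i (hj : SharedMeets A T j)
      (hi : (∃ a ∈ A i, ¬IsShared A a) ∨ ¬SharedMeets A T i) :
      m + 2 ≤ (T ∪ unsharedFree A T).card :=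
    (Nat.add_le_add_right (min_le_left _ _) 2).trans <|
      card_compl_add_two_le_card_union_unsharedFree hjik hj hmeets_k
        (exists_mem_union_unsharedFree hT hi)
  by_cases hi : SharedMeets A T i
  · by_cases hj : SharedMeets A T j
    · exact hij.elim (fun h => hbound_i hj (Or.inl h)) (fun h => hbound_j hi (Or.inl h))
    · exact hbound_j hi (Or.inr hj)
  · exact hbound_i (hmeets_ij.resolve_left hi) (Or.inr hi)

variable [Fintype ι] {x : σ}

open Classical in
/-- The elements outside all members of `A`, together with `x` when, apart from these elements,
`T` consists of a single element common to all members of `A`. -/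
noncomputable def coneFree (A : ι → Finset σ) (x : σ) (T : Finset σ) : Finset σ :=
  if ∃ c, (∀ l, c ∈ A l) ∧ T \ insert x (Finset.univ.biUnion A)ᶜ = {c} then
    insert x (Finset.univ.biUnion A)ᶜ
  else (Finset.univ.biUnion A)ᶜ

lemma compl_biUnion_subset_coneFree : (Finset.univ.biUnion A)ᶜ ⊆ coneFree A x T := by
  unfold coneFree
  split_ifs
  exacts [Finset.subset_insert _ _, subset_rfl]

lemma coneFree_subset_insert : coneFree A x T ⊆ insert x (Finset.univ.biUnion A)ᶜ := by
  unfold coneFree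
  split_ifs
  exacts [subset_rfl, Finset.subset_insert _ _]

lemma coneFree_eq_of_mem_Icc (hT' : T' ∈ Set.Icc (T \ coneFree A x T) (T ∪ coneFree A x T)) :
    coneFree A x T' = coneFree A x T := by
  have hcore : T' \ insert x (Finset.univ.biUnion A)ᶜ = T \ insert x (Finset.univ.biUnion A)ᶜ :=
    (sdiff_eq_and_union_eq_of_mem_Icc
      (Set.Icc_subset_Icc (Finset.sdiff_subset_sdiff subset_rfl coneFree_subset_insert)
        (Finset.union_subset_union_right coneFree_subset_insert) hT')).1
  simp only [coneFree, hcore]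

lemma notMem_compl_biUnion (hl : a ∈ A l) : a ∉ (Finset.univ.biUnion A)ᶜ := by
  simpa using ⟨l, hl⟩

lemma IsTransversal.sdiff_coneFree (hT : IsTransversal A T) :
    IsTransversal A (T \ coneFree A x T) := by
  intro l
  unfold coneFree
  split_ifs with h
  · obtain ⟨c, hc, hTc⟩ := h
    exact ⟨c, hTc ▸ Finset.mem_singleton_self c, hc l⟩
  · obtain ⟨a, haT, hal⟩ := hT l
    exact ⟨a, Finset.mem_sdiff.2 ⟨haT, notMem_compl_biUnion hal⟩, hal⟩

lemma card_compl_add_two_le_card_union_coneFree (hT : IsTransversal A T) (hxi : x ∈ A i)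
    (hxk : x ∉ A k) : (Finset.univ.biUnion A)ᶜ.card + 2 ≤ (T ∪ coneFree A x T).card := by
  set Z := (Finset.univ.biUnion A)ᶜ with hZ
  have hZsub : Z ⊆ T ∪ coneFree A x T :=
    compl_biUnion_subset_coneFree.trans Finset.subset_union_right
  by_cases h : ∃ c, (∀ l, c ∈ A l) ∧ T \ insert x Z = {c}
  · have hx : x ∈ coneFree A x T := by
      rw [coneFree, if_pos h]
      exact Finset.mem_insert_self x _
    obtain ⟨c, hc, hTc⟩ := h
    have hcT : c ∈ T := (Finset.mem_sdiff.1 (hTc ▸ Finset.mem_singleton_self c)).1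
    exact card_add_two_le_card hZsub (Finset.mem_union_left _ hcT) (Finset.mem_union_right _ hx)
      (notMem_compl_biUnion (hc i)) (notMem_compl_biUnion hxi) fun hcx => hxk (hcx ▸ hc k)
  · obtain ⟨a, haT, hai⟩ := hT i
    obtain ⟨b, hbT, l, hbl, hba⟩ : ∃ b ∈ T, ∃ l, b ∈ A l ∧ b ≠ a := by
      by_contra! hall
      have ha : ∀ l, a ∈ A l := fun l =>
        let ⟨b, hbT, hbl⟩ := hT l
        hall b hbT l hbl ▸ hbl
      refine h ⟨a, ha, Finset.eq_singleton_iff_unique_mem.2 ⟨?_, fun b hb => ?_⟩⟩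
      · have hax : a ≠ x := fun hax => hxk (hax ▸ ha k)
        exact Finset.mem_sdiff.2 ⟨haT, by simp [hax, notMem_compl_biUnion hai, hZ]⟩
      · obtain ⟨hbT, hb⟩ := Finset.mem_sdiff.1 hb
        obtain ⟨l, hbl⟩ : ∃ l, b ∈ A l := by
          simpa [hZ] using fun h => hb (Finset.mem_insert_of_mem h)
        exact hall b hbT l hbl
    exact card_add_two_le_card hZsub (Finset.mem_union_left _ hbT) (Finset.mem_union_left _ haT)
      (notMem_compl_biUnion hbl) (notMem_compl_biUnion hai) hba

end FreeParts

section ThreePrimes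

variable {n : ℕ} {K : Type*} [Field K] {ι : Type*} {A : ι → Finset (Fin n)}

theorem card_add_card_le_sdepth [Fintype ι] (hA : ∀ l, ∃ a ∈ A l, ¬IsShared A a) :
    (Finset.univ.biUnion A)ᶜ.card + Fintype.card ι ≤ sdepth (⨅ l, varIdeal K (A l)) :=
  le_sdepth_of_free (fun l => (hA l).imp fun _ h => h.1)
    (fun _ => IsTransversal.sdiff_unsharedFree) (fun _ _ => unsharedFree_eq_of_mem_Icc)
    fun _ hT => card_add_card_le_card_union_unsharedFree hT hA

theorem min_card_add_two_le_sdepth {i j k : ι} (hA : ∀ l, (A l).Nonempty)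
    (hijk : ∀ l, l = i ∨ l = j ∨ l = k) (hk : ∀ a ∈ A k, IsShared A a)
    (hij : (∃ a ∈ A i, ¬IsShared A a) ∨ ∃ a ∈ A j, ¬IsShared A a) :
    min (A i ∪ A k)ᶜ.card (A j ∪ A k)ᶜ.card + 2 ≤ sdepth (⨅ l, varIdeal K (A l)) :=
  le_sdepth_of_free hA (fun _ => IsTransversal.sdiff_unsharedFree)
    (fun _ _ => unsharedFree_eq_of_mem_Icc)
    fun _ => min_card_compl_add_two_le_card_union_unsharedFree hijk hk hij

theorem card_add_two_le_sdepth [Fintype ι] (hA : ∀ l, (A l).Nonempty) {i k : ι}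
    (hik : ¬A i ⊆ A k) :
    (Finset.univ.biUnion A)ᶜ.card + 2 ≤ sdepth (⨅ l, varIdeal K (A l)) := by
  obtain ⟨x, hxi, hxk⟩ := Finset.not_subset.1 hik
  exact le_sdepth_of_free hA (fun _ => IsTransversal.sdiff_coneFree (x := x))
    (fun _ _ => coneFree_eq_of_mem_Icc)
    fun _ hT => card_compl_add_two_le_card_union_coneFree hT hxi hxk

theorem moduleDepth_le_sdepth_of_forall_isShared {i j k : ι} (hik : i ≠ k)
    (hjk : j ≠ k) (hijk : ∀ l, l = i ∨ l = j ∨ l = k) (hA : Pairwise fun l l' => ¬A l ⊆ A l')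
    (hk : ∀ a ∈ A k, IsShared A a) :
    moduleDepth (MvPolynomial (Fin n) K) (maxIdeal n K) ↥(⨅ l, varIdeal K (A l)) ≤
      sdepth (⨅ l, varIdeal K (A l)) := by
  have hne : ∀ l, (A l).Nonempty := fun l =>
    have : Nontrivial ι := ⟨i, k, hik⟩
    let ⟨_, hl⟩ := exists_ne l
    let ⟨a, ha, _⟩ := Finset.not_subset.1 (hA hl.symm)
    ⟨a, ha⟩
  have hcover : ∀ a ∈ A k, a ∈ A i ∨ a ∈ A j := by
    intro a ha
    obtain ⟨l, hlk, hal⟩ := (hk a ha).exists_ne k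
    rcases hijk l with rfl | rfl | rfl
    exacts [Or.inl hal, Or.inr hal, absurd rfl hlk]
  have hdepth_i := moduleDepth_le_card_add_two (K := K) (hA hik) (hA hik.symm) fun l => by
    rcases hijk l with rfl | rfl | rfl <;> grind
  have hdepth_j := moduleDepth_le_card_add_two (K := K) (hA hjk) (hA hjk.symm) fun l => by
    rcases hijk l with rfl | rfl | rfl <;> grind
  by_cases hunshared : (∃ a ∈ A i, ¬IsShared A a) ∨ ∃ a ∈ A j, ¬IsShared A a
  · refine le_trans ?_ (min_card_add_two_le_sdepth hne hijk hk hunshared)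
    rw [← Nat.add_min_add_right]
    exact le_min hdepth_i hdepth_j
  · have : Finite ι :=
      Set.finite_univ_iff.1 ((Set.toFinite {i, j, k}).subset fun l _ => hijk l)
    have := Fintype.ofFinite ι
    push Not at hunshared
    have hshared : ∀ l, ∀ a ∈ A l, IsShared A a := by
      intro l
      rcases hijk l with rfl | rfl | rfl
      exacts [hunshared.1, hunshared.2, hk]
    have hunion := union_eq_biUnion_of_forall_isShared hijk hshared
    exact hdepth_i.trans (hunion ▸ card_add_two_le_sdepth hne (hA hik))

theorem moduleDepth_le_sdepth {A : Fin 3 → Finset (Fin n)}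
    (hA : Pairwise fun l l' => ¬A l ⊆ A l') :
    moduleDepth (MvPolynomial (Fin n) K) (maxIdeal n K) ↥(⨅ l, varIdeal K (A l)) ≤
      sdepth (⨅ l, varIdeal K (A l)) := by
  by_cases hunshared : ∀ l, ∃ a ∈ A l, ¬IsShared A a
  · exact (moduleDepth_le_card_add_card hunshared).trans (card_add_card_le_sdepth hunshared)
  · push Not at hunshared
    obtain ⟨k, hk⟩ := hunshared
    have hindices : ∀ k : Fin 3, ∃ i j, i ≠ k ∧ j ≠ k ∧ ∀ l, l = i ∨ l = j ∨ l = k := by decide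
    obtain ⟨i, j, hik, hjk, hijk⟩ := hindices k
    exact moduleDepth_le_sdepth_of_forall_isShared hik hjk hijk hA hk

end ThreePrimes

/-- Stanley's conjecture for the intersection of three pairwise
incomparable nonzero monomial prime ideals: `sdepth I ≥ depth I`. -/
theorem stanley_conjecture_three_primes {K : Type*} [Field K] (n : ℕ)
    (A1 A2 A3 : Finset (Fin n)) :
    letI P1 : Ideal (MvPolynomial (Fin n) K) := varIdeal K A1
    letI P2 : Ideal (MvPolynomial (Fin n) K) := varIdeal K A2
    letI P3 : Ideal (MvPolynomial (Fin n) K) := varIdeal K A3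
    P1 ≠ ⊥ → P2 ≠ ⊥ → P3 ≠ ⊥ →
    ¬P1 ≤ P2 → ¬P2 ≤ P1 → ¬P1 ≤ P3 → ¬P3 ≤ P1 → ¬P2 ≤ P3 → ¬P3 ≤ P2 →
    sdepth (P1 ⊓ P2 ⊓ P3) ≥
      moduleDepth (MvPolynomial (Fin n) K) (maxIdeal n K) ↥(P1 ⊓ P2 ⊓ P3) := by
  intro _ _ _ h12 h21 h13 h31 h23 h32
  have hiInf : varIdeal K A1 ⊓ varIdeal K A2 ⊓ varIdeal K A3 =
      ⨅ l, varIdeal K (![A1, A2, A3] l) := by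
    ext f
    simp [Submodule.mem_iInf, Fin.forall_fin_succ, and_assoc]
  have hA : Pairwise fun l l' => ¬![A1, A2, A3] l ⊆ ![A1, A2, A3] l' := by
    intro l l' hne hsub
    have := varIdeal_mono (K := K) hsub
    fin_cases l <;> fin_cases l' <;> simp_all
  rw [hiInf]
  exact moduleDepth_le_sdepth hA
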